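/- Let K be a field, A a commutative K-algebra, B a module over A⊗A, and M an A-module. Write a·₁x = (a⊗1)x and a·₂x = (1⊗a)x for the two A-module structures on B, let B ⊗_A B denote the tensor product over A of B (with the A-action ·₂) and B (with the A-action ·₁). Regard B ⊗_A B as an A^{⊗3}-module by (a⊗b⊗c)·(x⊗y) = ((a⊗b)x) ⊗ ((1⊗c)y), regard B ⊗_K B as an A^{⊗4}-module by (a⊗b⊗c⊗d)·(x⊗y) = ((a⊗b)x) ⊗ ((c⊗d)y), and regard M as an A^{⊗3}-module via μ_3 and as an A^{⊗4}-module via μ_4. Assume that B is flat as an A-module for the action ·₁ and also for the action ·₂. Then for every natural number n, the K-vector spaces Ext^n_{A^{⊗3}}(B ⊗_A B, M) and Ext^n_{A^{⊗4}}(B ⊗_K B, M) are isomorphic. -/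

import Mathlib

/-!
STATEMENT 2: Setting as in Statement 1: `K` a field, `A` a commutative `K`-algebra, `B` a
module over `A ⊗ A`, `M` an `A`-module; `B ⊗_A B` is the quotient of `B ⊗_K B` by the
balancing relations `((1 ⊗ a) x) ⊗ y - x ⊗ ((a ⊗ 1) y)` (tensor over `A` of `B` with the
action `·₂` and `B` with the action `·₁`); `B ⊗_K B` is an `A^{⊗4} = (A⊗A) ⊗ (A⊗A)`-module
by `(a⊗b⊗c⊗d) · (x⊗y) = ((a⊗b)x) ⊗ ((c⊗d)y)` (an instance hypothesis characterised on pure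
tensors by `hsmul`); `B ⊗_A B` is an `A^{⊗3} = (A⊗A) ⊗ A`-module by
`(a⊗b⊗c) · (x⊗y) = ((a⊗b)x) ⊗ ((1⊗c)y)`, i.e. by restricting the quotient
`A^{⊗4}`-structure along `ρ : a⊗b⊗c ↦ a⊗b⊗1⊗c`; `M` is an `A^{⊗3}`-module via `μ₃` and an
`A^{⊗4}`-module via `μ₄`.  Assume `B` is flat as an `A`-module for the action `·₁`
(restriction along `includeLeft : a ↦ a ⊗ 1`) and for `·₂` (along `includeRight`).
Then for every `n : ℕ` the `K`-vector spaces `Ext^n_{A^{⊗3}}(B ⊗_A B, M)` and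
`Ext^n_{A^{⊗4}}(B ⊗_K B, M)` are isomorphic.
-/

open CategoryTheory
open scoped TensorProduct

noncomputable section

/-- The multiplication map `μ₂ : A ⊗ A → A`. -/
def mu2 (K : Type) [Field K] (A : Type) [CommRing A] [Algebra K A] :
    A ⊗[K] A →ₐ[K] A :=
  Algebra.TensorProduct.lmul' K

/-- The multiplication map `μ₃ : A^{⊗3} = (A ⊗ A) ⊗ A → A`, `a ⊗ b ⊗ c ↦ abc`. -/
def mu3 (K : Type) [Field K] (A : Type) [CommRing A] [Algebra K A] :
    (A ⊗[K] A) ⊗[K] A →ₐ[K] A :=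
  (mu2 K A).comp (Algebra.TensorProduct.map (mu2 K A) (AlgHom.id K A))

/-- The multiplication map `μ₄ : A^{⊗4} = (A ⊗ A) ⊗ (A ⊗ A) → A`, `a ⊗ b ⊗ c ⊗ d ↦ abcd`. -/
def mu4 (K : Type) [Field K] (A : Type) [CommRing A] [Algebra K A] :
    (A ⊗[K] A) ⊗[K] (A ⊗[K] A) →ₐ[K] A :=
  (mu2 K A).comp (Algebra.TensorProduct.map (mu2 K A) (mu2 K A))

/-- The map `ρ : A^{⊗3} → A^{⊗4}`, `a ⊗ b ⊗ c ↦ a ⊗ b ⊗ 1 ⊗ c`. -/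
def rho (K : Type) [Field K] (A : Type) [CommRing A] [Algebra K A] :
    (A ⊗[K] A) ⊗[K] A →ₐ[K] (A ⊗[K] A) ⊗[K] (A ⊗[K] A) :=
  Algebra.TensorProduct.map (AlgHom.id K (A ⊗[K] A)) Algebra.TensorProduct.includeRight

/-- The balancing relators `((1 ⊗ a) x) ⊗ y - x ⊗ ((a ⊗ 1) y)` whose span is the kernel of
the canonical quotient map `B ⊗_K B → B ⊗_A B`. -/
def relators (K : Type) [Field K] (A : Type) [CommRing A] [Algebra K A]
    (B : Type) [AddCommGroup B] [Module K B] [Module (A ⊗[K] A) B]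
    [Module ((A ⊗[K] A) ⊗[K] (A ⊗[K] A)) (B ⊗[K] B)] :
    Submodule ((A ⊗[K] A) ⊗[K] (A ⊗[K] A)) (B ⊗[K] B) :=
  Submodule.span _
    {z | ∃ (a : A) (x y : B),
      z = ((((1 : A) ⊗ₜ[K] a : A ⊗[K] A) • x) ⊗ₜ[K] y : B ⊗[K] B) -
            x ⊗ₜ[K] (((a ⊗ₜ[K] (1 : A) : A ⊗[K] A) • y : B))}

/-!
The multiplication `φ : A^{⊗4} → A^{⊗3}` of the two middle factors is the base change of
`μ₂ : A ⊗ A → A` along `j : s ⊗ t ↦ 1 ⊗ s ⊗ t ⊗ 1`, and `B ⊗_A B` is the extension of scalars of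
`B ⊗_K B` along `φ`. The map `j` is flat, and the two flatness hypotheses on `B` make `B ⊗_K B`
flat along `j`. By flat base change the Tor of `A^{⊗3}` with `B ⊗_K B` over `A^{⊗4}` is that of `A`
with `B ⊗_K B` over `A ⊗ A`, which vanishes in positive degrees. So extension of scalars along `φ`
turns projective resolutions of `B ⊗_K B` into projective resolutions of `B ⊗_A B`, and the
adjunction between extension and restriction of scalars identifies the two Hom complexes. The
coefficients match since `μ₄ = μ₃ ∘ φ`.
-/

section SyzygyAdapted

open Limits

variable {C D : Type*} [Category* C] [Category* D] [Abelian C]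

/-- A functor `F` is adapted to a class `W` of objects if, for every short exact sequence
`0 ⟶ Z ⟶ P ⟶ X ⟶ 0` with `P` projective and `X` in `W`, the syzygy `Z` is again in `W` and
`F` keeps `Z ⟶ P` a monomorphism. For right exact `F` this makes the projective resolutions of
objects of `W` stay exact under `F`. -/
structure IsSyzygyAdapted (F : C ⥤ D) (W : ObjectProperty C) : Prop where
  prop_syzygy {S : ShortComplex C} (hS : S.ShortExact) (hP : Projective S.X₂) (hX : W S.X₃) :
    W S.X₁
  mono_map_f {S : ShortComplex C} (hS : S.ShortExact) (hP : Projective S.X₂) (hX : W S.X₃) :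
    Mono (F.map S.f)

/-- The short complex `coker f ⟶ X₃ ⟶ coker g` attached to `X₁ ⟶ X₂ ⟶ X₃`. -/
@[simps]
def syzygyShortComplex (S : ShortComplex C) : ShortComplex C where
  f := cokernel.desc S.f S.g S.zero
  g := cokernel.π S.g
  zero := by simp [← cancel_epi (cokernel.π S.f)]

lemma shortExact_syzygyShortComplex {S : ShortComplex C} (hS : S.Exact) :
    (syzygyShortComplex S).ShortExact where
  exact := by
    let ψ : .mk S.g (cokernel.π S.g) (by simp) ⟶ syzygyShortComplex S :=
      { τ₁ := cokernel.π S.f, τ₂ := 𝟙 S.X₃, τ₃ := 𝟙 (cokernel S.g)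
        comm₁₂ := (cokernel.π_desc S.f S.g S.zero).trans (Category.comp_id S.g).symm
        comm₂₃ := (Category.id_comp _).trans (Category.comp_id _).symm }
    have : Epi ψ.τ₁ := inferInstanceAs (Epi (cokernel.π S.f))
    have : IsIso ψ.τ₂ := inferInstanceAs (IsIso (𝟙 S.X₃))
    have : Mono ψ.τ₃ := inferInstanceAs (Mono (𝟙 (cokernel S.g)))
    exact (ShortComplex.exact_iff_of_epi_of_isIso_of_mono ψ).1 (ShortComplex.exact_cokernel S.g)
  mono_f := hS.mono_cokernelDesc
  epi_g := inferInstanceAs (Epi (cokernel.π S.g))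

lemma IsSyzygyAdapted.prop_cokernel_d {F : C ⥤ D} {W : ObjectProperty C}
    [W.IsClosedUnderIsomorphisms] (hF : IsSyzygyAdapted F W) {X : C}
    (P : ProjectiveResolution X) (hX : W X) (n : ℕ) :
    W (cokernel (P.complex.d (n + 1) n)) := by
  induction n with
  | zero =>
    exact W.prop_of_iso (P.isColimitCokernelCofork.coconePointUniqueUpToIso
      (colimit.isColimit (parallelPair (P.complex.d 1 0) 0))) hX
  | succ n ih =>
    exact hF.prop_syzygy (shortExact_syzygyShortComplex (P.exact_succ n)) (P.projective n) ih

variable [Abelian D] {F : C ⥤ D} [F.Additive] [PreservesFiniteColimits F] {W : ObjectProperty C}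

lemma exact_map_of_mono_map_syzygy (S : ShortComplex C)
    (h : Mono (F.map (syzygyShortComplex S).f)) : (S.map F).Exact := by
  have : Mono (F.map (cokernel.desc S.f S.g S.zero)) := h
  have := mono_comp (cokernelComparison S.f F) (F.map (cokernel.desc S.f S.g S.zero))
  rw [cokernelComparison_map_desc] at this
  exact (S.map F).exact_iff_mono_cokernel_desc.2 this

lemma IsSyzygyAdapted.exact_map_d_d [W.IsClosedUnderIsomorphisms] (hF : IsSyzygyAdapted F W)
    {X : C} (P : ProjectiveResolution X) (hX : W X) (n : ℕ) :
    ((ShortComplex.mk _ _ (P.complex.d_comp_d (n + 2) (n + 1) n)).map F).Exact :=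
  exact_map_of_mono_map_syzygy _ (hF.mono_map_f (shortExact_syzygyShortComplex (P.exact_succ n))
    (P.projective n) (hF.prop_cokernel_d P hX n))

lemma quasiIso_toSingle₀Equiv_symm {Q : ChainComplex D ℕ} {X : D} (ε : Q.X 0 ⟶ X) (hε : Epi ε)
    (w : Q.d 1 0 ≫ ε = 0) (h₀ : (ShortComplex.mk _ _ w).Exact) (h : ∀ n, Q.ExactAt (n + 1)) :
    QuasiIso ((Q.toSingle₀Equiv X).symm ⟨ε, w⟩) := by
  refine ⟨fun n ↦ ?_⟩
  cases n with
  | zero =>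
    rw [ChainComplex.quasiIsoAt₀_iff, ShortComplex.quasiIso_iff_of_zeros' _
      (Q.shape 0 0 (by simp)) rfl rfl]
    refine (ShortComplex.exact_and_epi_g_iff_of_iso ?_).2 ⟨h₀, hε⟩
    exact ShortComplex.isoMk (.refl (Q.X 1)) (.refl (Q.X 0)) (.refl X)
      ((Category.id_comp _).trans (Category.comp_id _).symm)
      ((Category.id_comp _).trans ((Category.comp_id _).trans
        (ChainComplex.toSingle₀Equiv_symm_apply_f_zero ε w)).symm)
  | succ n =>
    rw [quasiIsoAt_iff_exactAt' _ _ (ChainComplex.exactAt_succ_single_obj _ _)]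
    exact h n

/-- The image under a right exact functor `F` of a projective resolution of an object of `W`,
as a projective resolution, for `F` adapted to `W`. -/
@[simps complex]
def IsSyzygyAdapted.mapProjectiveResolution [W.IsClosedUnderIsomorphisms]
    [F.PreservesProjectiveObjects] (hF : IsSyzygyAdapted F W) {X : C}
    (P : ProjectiveResolution X) (hX : W X) : ProjectiveResolution (F.obj X) where
  complex := (F.mapHomologicalComplex _).obj P.complex
  projective n := Functor.PreservesProjectiveObjects.projective_obj (P.projective n)
  π :=
    let ε := P.complex.toSingle₀Equiv X P.π
    (ChainComplex.toSingle₀Equiv _ _).symm ⟨F.map ε.1,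
      (F.map_comp _ _).symm.trans ((congrArg F.map ε.2).trans (F.map_zero _ _))⟩
  quasiIso := by
    have : Epi (P.complex.toSingle₀Equiv X P.π).1 := inferInstanceAs (Epi (P.π.f 0))
    refine quasiIso_toSingle₀Equiv_symm _ (F.map_epi (P.complex.toSingle₀Equiv X P.π).1) _
      (P.exact₀.map_of_epi_of_preservesCokernel F this inferInstance) fun n ↦ ?_
    rw [HomologicalComplex.exactAt_iff' _ (n + 2) (n + 1) n (by simp) (by simp)]
    exact hF.exact_map_d_d P hX n

end SyzygyAdapted

universe u

section ExtExtendScalars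

variable {R S : Type u} [CommRing R] [CommRing S] (φ : R →+* S)

/-- The adjunction between extension and restriction of scalars, as an `R`-linear isomorphism. -/
def extendScalarsHomIso (P : ModuleCat.{u} R) (N : ModuleCat.{u} S) :
    (ModuleCat.restrictScalars φ).obj
        (ModuleCat.of S ((ModuleCat.extendScalars φ).obj P ⟶ N)) ≅
      ModuleCat.of R (P ⟶ (ModuleCat.restrictScalars φ).obj N) :=
  let e : (ModuleCat.restrictScalars φ).obj
      (ModuleCat.of S ((ModuleCat.extendScalars φ).obj P ⟶ N)) ≃ₗ[R]
        ModuleCat.of R (P ⟶ (ModuleCat.restrictScalars φ).obj N) :=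
    { (ModuleCat.extendRestrictScalarsAdj φ).homEquiv P N with
      map_add' := fun _ _ ↦ ModuleCat.hom_ext rfl
      map_smul' := fun _ _ ↦ ModuleCat.hom_ext rfl }
  e.toModuleIso

/-- `extendScalarsHomIso` applied degreewise to a chain complex. -/
def extendScalarsLinearYonedaObjIso (P : ChainComplex (ModuleCat.{u} R) ℕ) (N : ModuleCat.{u} S) :
    ((ModuleCat.restrictScalars φ).mapHomologicalComplex _).obj
        (ChainComplex.linearYonedaObj
          (((ModuleCat.extendScalars φ).mapHomologicalComplex _).obj P) S N) ≅
      P.linearYonedaObj R ((ModuleCat.restrictScalars φ).obj N) :=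
  HomologicalComplex.Hom.isoOfComponents (fun i ↦ extendScalarsHomIso φ (P.X i) N)
    fun i j _ ↦ ModuleCat.hom_ext <| LinearMap.ext fun f ↦
      ((ModuleCat.extendRestrictScalarsAdj φ).homEquiv_naturality_left (P.d j i) f).symm

variable {φ} in
/-- Ext over `S` out of `S ⊗[R] X`, viewed as an `R`-module, is Ext over `R` out of `X`, for `X`
in a class of modules to which extension of scalars is adapted. -/
def IsSyzygyAdapted.extExtendScalarsIso {W : ObjectProperty (ModuleCat.{u} R)}
    [W.IsClosedUnderIsomorphisms] (hφ : IsSyzygyAdapted (ModuleCat.extendScalars φ) W)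
    {X : ModuleCat.{u} R} (hX : W X) (N : ModuleCat.{u} S) (n : ℕ) :
    (ModuleCat.restrictScalars φ).obj
        (((Ext S (ModuleCat S) n).obj (.op ((ModuleCat.extendScalars φ).obj X))).obj N) ≅
      ((Ext R (ModuleCat R) n).obj (.op X)).obj ((ModuleCat.restrictScalars φ).obj N) :=
  have := (ModuleCat.extendRestrictScalarsAdj φ).left_adjoint_additive
  have := Functor.preservesProjectiveObjects_of_adjunction_of_preservesEpimorphisms
    (ModuleCat.extendRestrictScalarsAdj φ)
  let P := ProjectiveResolution.of X
  let Y := ChainComplex.linearYonedaObj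
    (((ModuleCat.extendScalars φ).mapHomologicalComplex _).obj P.complex) S N
  (ModuleCat.restrictScalars φ).mapIso ((hφ.mapProjectiveResolution P hX).isoExt n N) ≪≫
    ((Y.sc n).mapHomologyIso (ModuleCat.restrictScalars φ)).symm ≪≫
    (HomologicalComplex.homologyFunctor _ _ n).mapIso
      (extendScalarsLinearYonedaObjIso φ P.complex N) ≪≫
    (P.isoExt n _).symm

end ExtExtendScalars

section TensorFlat

variable {K S T : Type*} [CommRing K] [CommRing S] [CommRing T] [Algebra K S] [Algebra K T]

attribute [local instance] Algebra.TensorProduct.rightAlgebra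

variable (K S T) in
/-- The isomorphism `M ⊗[K] N ≃ ((S ⊗[K] T) ⊗[S] M) ⊗[T] N`, `m ⊗ n ↦ (1 ⊗ m) ⊗ n`. -/
def tensorBaseChangeEquiv (M N : Type*) [AddCommGroup M] [AddCommGroup N] [Module K M]
    [Module K N] [Module S M] [Module T N] [IsScalarTower K S M] [IsScalarTower K T N] :
    M ⊗[K] N ≃ₗ[K] ((S ⊗[K] T) ⊗[S] M) ⊗[T] N :=
  TensorProduct.comm K M N ≪≫ₗ
    (TensorProduct.AlgebraTensorModule.cancelBaseChange K T T N M).symm.restrictScalars K ≪≫ₗ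
    ((TensorProduct.comm T N (T ⊗[K] M)) ≪≫ₗ
      ((Algebra.IsPushout.cancelBaseChange K T S (S ⊗[K] T) M).symm.rTensor N)).restrictScalars K

variable {M N : Type*} [AddCommGroup M] [AddCommGroup N] [Module K M]
  [Module K N] [Module S M] [Module T N] [IsScalarTower K S M] [IsScalarTower K T N]

lemma tensorBaseChangeEquiv_tmul (m : M) (n : N) :
    tensorBaseChangeEquiv K S T M N (m ⊗ₜ n) = (1 ⊗ₜ m) ⊗ₜ n := by
  simp [tensorBaseChangeEquiv]

lemma tensorBaseChangeEquiv_smul [Module (S ⊗[K] T) (M ⊗[K] N)]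
    (h : ∀ (s : S) (t : T) (m : M) (n : N),
      (s ⊗ₜ[K] t : S ⊗[K] T) • (m ⊗ₜ[K] n : M ⊗[K] N) = (s • m) ⊗ₜ (t • n))
    (q : S ⊗[K] T) (x : M ⊗[K] N) :
    tensorBaseChangeEquiv K S T M N (q • x) = q • tensorBaseChangeEquiv K S T M N x := by
  induction x with
  | zero => simp
  | add x y hx hy => simp only [smul_add, map_add, hx, hy]
  | tmul m n =>
    induction q with
    | zero => simp
    | add p q hp hq => simp only [add_smul, map_add, hp, hq]
    | tmul s t =>
      have hst : (s ⊗ₜ[K] t : S ⊗[K] T) = t • s • (1 : S ⊗[K] T) := by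
        rw [Algebra.smul_def t, Algebra.smul_def s, Algebra.TensorProduct.right_algebraMap_apply]
        simp
      calc tensorBaseChangeEquiv K S T M N (s ⊗ₜ[K] t • m ⊗ₜ n)
          = ((1 : S ⊗[K] T) ⊗ₜ[S] (s • m)) ⊗ₜ[T] (t • n) := by
            rw [h, tensorBaseChangeEquiv_tmul]
        _ = ((t • s • (1 : S ⊗[K] T)) ⊗ₜ m) ⊗ₜ n := by
            rw [← TensorProduct.smul_tmul, ← TensorProduct.smul_tmul, TensorProduct.smul_tmul']
        _ = (s ⊗ₜ[K] t) • tensorBaseChangeEquiv K S T M N (m ⊗ₜ n) := by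
            rw [← hst, tensorBaseChangeEquiv_tmul, TensorProduct.smul_tmul',
              TensorProduct.smul_tmul', smul_eq_mul, mul_one]

lemma flat_tensorProduct [Module (S ⊗[K] T) (M ⊗[K] N)]
    (h : ∀ (s : S) (t : T) (m : M) (n : N),
      (s ⊗ₜ[K] t : S ⊗[K] T) • (m ⊗ₜ[K] n : M ⊗[K] N) = (s • m) ⊗ₜ (t • n))
    [Module.Flat S M] [Module.Flat T N] :
    Module.Flat (S ⊗[K] T) (M ⊗[K] N) :=
  Module.Flat.of_linearEquiv
    { tensorBaseChangeEquiv K S T M N with map_smul' := tensorBaseChangeEquiv_smul h }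

end TensorFlat

section FlatOver

lemma flat_of_exact_of_flat {C : Type*} [CommRing C] {M N P : Type*} [AddCommGroup M]
    [AddCommGroup N] [AddCommGroup P] [Module C M] [Module C N] [Module C P] [Module.Flat C N]
    [Module.Flat C P] {g : M →ₗ[C] N} {f : N →ₗ[C] P} (hg : Function.Injective g)
    (hgf : Function.Exact g f) (hf : Function.Surjective f) : Module.Flat C M := by
  rw [Module.Flat.iff_rTensor_injective']
  intro I
  have hgI : Function.Injective (g.lTensor I) :=
    LinearMap.lTensor_injective_of_exact_of_flat f hf g hg hgf I
  have hIN : Function.Injective (I.subtype.rTensor N) :=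
    Module.Flat.rTensor_preserves_injective_linearMap _ I.injective_subtype
  have hcomm : (g.lTensor C) ∘ₗ (I.subtype.rTensor M) = (I.subtype.rTensor N) ∘ₗ (g.lTensor I) :=
    (LinearMap.lTensor_comp_rTensor ..).trans (LinearMap.rTensor_comp_lTensor ..).symm
  refine Function.Injective.of_comp (f := g.lTensor C) ?_
  rw [← LinearMap.coe_comp, hcomm]
  exact hIN.comp hgI

lemma lTensor_injective_of_isPushout {C D R S : Type*} [CommRing C] [CommRing D] [CommRing R]
    [CommRing S] [Algebra C D] [Algebra C R] [Algebra R S] [Algebra D S] [Algebra C S]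
    [IsScalarTower C R S] [IsScalarTower C D S] [Algebra.IsPushout C D R S] {M N P : Type*}
    [AddCommGroup M] [AddCommGroup N] [AddCommGroup P] [Module C M] [Module C N] [Module C P]
    [Module R M] [Module R N] [Module R P] [IsScalarTower C R M] [IsScalarTower C R N]
    [IsScalarTower C R P] [Module.Flat C P] {g : M →ₗ[R] N} {f : N →ₗ[R] P}
    (hg : Function.Injective g) (hgf : Function.Exact g f) (hf : Function.Surjective f) :
    Function.Injective (g.lTensor S) := by
  have hD : Function.Injective ((g.restrictScalars C).lTensor D) :=
    LinearMap.lTensor_injective_of_exact_of_flat (f.restrictScalars C) hf _ hg hgf D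
  let eM := Algebra.IsPushout.cancelBaseChange C D R S M
  let eN := Algebra.IsPushout.cancelBaseChange C D R S N
  have hcomm (x : D ⊗[C] M) :
      eN.symm ((g.restrictScalars C).lTensor D x) = g.lTensor S (eM.symm x) := by
    induction x with
    | zero => simp only [map_zero]
    | add x y hx hy => simp only [map_add, hx, hy]
    | tmul d m => simp [eM, eN]
  have hcomp : Function.Injective (g.lTensor S ∘ eM.symm) := by
    convert eN.symm.injective.comp hD using 1
    exact (funext hcomm).symm
  exact (Function.Injective.of_comp_iff' _ eM.symm.bijective).1 hcomp

/-- The class of `R`-modules that are flat over `C` after restriction of scalars along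
`j : C →+* R`. -/
def flatOver {C R : Type*} [CommRing C] [CommRing R] (j : C →+* R) :
    ObjectProperty (ModuleCat.{u} R) :=
  fun N ↦ Module.Flat C ((ModuleCat.restrictScalars j).obj N)

instance {C R : Type*} [CommRing C] [CommRing R] (j : C →+* R) :
    (flatOver.{u} j).IsClosedUnderIsomorphisms where
  of_iso e (_ : Module.Flat C _) :=
    Module.Flat.of_linearEquiv ((ModuleCat.restrictScalars j).mapIso e.symm).toLinearEquiv

lemma flatOver_tensorProduct {K S T P Q M N : Type*} [CommRing K] [CommRing S] [CommRing T]
    [CommRing P] [CommRing Q] [Algebra K S] [Algebra K T] [Algebra K P] [Algebra K Q]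
    [AddCommGroup M] [AddCommGroup N] [Module K M] [Module K N] [Module P M] [Module Q N]
    [IsScalarTower K P M] [IsScalarTower K Q N] [Module (P ⊗[K] Q) (M ⊗[K] N)]
    (h : ∀ (p : P) (q : Q) (m : M) (n : N),
      (p ⊗ₜ[K] q : P ⊗[K] Q) • (m ⊗ₜ[K] n : M ⊗[K] N) = (p • m) ⊗ₜ (q • n))
    {f : S →ₐ[K] P} {g : T →ₐ[K] Q} (hM : flatOver f.toRingHom (ModuleCat.of P M))
    (hN : flatOver g.toRingHom (ModuleCat.of Q N)) :
    flatOver (Algebra.TensorProduct.map f g).toRingHom (ModuleCat.of (P ⊗[K] Q) (M ⊗[K] N)) := by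
  let _ : Module S M := Module.compHom M f.toRingHom
  let _ : Module T N := Module.compHom N g.toRingHom
  let _ : Module (S ⊗[K] T) (M ⊗[K] N) :=
    Module.compHom _ (Algebra.TensorProduct.map f g).toRingHom
  have : IsScalarTower K S M := .of_algebraMap_smul fun k m ↦
    (congrArg (· • m) (f.commutes k)).trans (algebraMap_smul P k m)
  have : IsScalarTower K T N := .of_algebraMap_smul fun k n ↦
    (congrArg (· • n) (g.commutes k)).trans (algebraMap_smul Q k n)
  have : Module.Flat S M := hM
  have : Module.Flat T N := hN
  exact flat_tensorProduct fun s t m n ↦ h (f s) (g t) m n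

lemma isSyzygyAdapted_extendScalars {C D R S : Type u} [CommRing C] [CommRing D] [CommRing R]
    [CommRing S] {μ : C →+* D} {j : C →+* R} {ι : D →+* S} {φ : R →+* S}
    (h : IsPushout (CommRingCat.ofHom μ) (CommRingCat.ofHom j) (CommRingCat.ofHom ι)
      (CommRingCat.ofHom φ)) (hj : j.Flat) :
    IsSyzygyAdapted (ModuleCat.extendScalars φ) (flatOver.{u} j) := by
  algebraize [μ, j, ι, φ, φ.comp j]
  have : IsScalarTower C D S := .of_algebraMap_eq' (congrArg CommRingCat.Hom.hom h.w).symm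
  have : Algebra.IsPushout C D R S := CommRingCat.isPushout_iff_isPushout.1 h
  let _ (X : ModuleCat.{u} R) : Module C X := Module.compHom X j
  have (X : ModuleCat.{u} R) : IsScalarTower C R X := .of_compHom ..
  constructor <;> intro T hT hP hX <;>
    have hexact := (ShortComplex.ShortExact.moduleCat_exact_iff_function_exact T).1 hT.exact <;>
    have : Module.Flat C T.X₃ := hX
  · have : Module.Projective R T.X₂ := (IsProjective.iff_projective _).2 hP
    have : Module.Flat C T.X₂ := .trans C R T.X₂
    exact flat_of_exact_of_flat (g := T.f.hom.restrictScalars C) (f := T.g.hom.restrictScalars C)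
      hT.moduleCat_injective_f hexact hT.moduleCat_surjective_g
  · rw [ModuleCat.mono_iff_injective]
    exact lTensor_injective_of_isPushout (C := C) (D := D) (S := S) hT.moduleCat_injective_f
      hexact hT.moduleCat_surjective_g

lemma isPushout_of_surjective {C D R S : Type u} [CommRing C] [CommRing D] [CommRing R]
    [CommRing S] {μ : C →+* D} {j : C →+* R} {ι : D →+* S} {φ : R →+* S}
    (w : ι.comp μ = φ.comp j) (hμ : Function.Surjective μ) (hφ : Function.Surjective φ)
    (hker : RingHom.ker φ ≤ (RingHom.ker μ).map j) :
    IsPushout (CommRingCat.ofHom μ) (CommRingCat.ofHom j) (CommRingCat.ofHom ι)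
      (CommRingCat.ofHom φ) := by
  have : Epi (CommRingCat.ofHom μ) := ConcreteCategory.epi_of_surjective _ hμ
  have : Epi (CommRingCat.ofHom φ) := ConcreteCategory.epi_of_surjective _ hφ
  have w' : CommRingCat.ofHom μ ≫ CommRingCat.ofHom ι =
      CommRingCat.ofHom j ≫ CommRingCat.ofHom φ :=
    CommRingCat.hom_ext w
  have hle (s : Limits.PushoutCocone (CommRingCat.ofHom μ) (CommRingCat.ofHom j)) :
      RingHom.ker φ ≤ RingHom.ker s.inr.hom := by
    refine hker.trans (Ideal.map_le_iff_le_comap.2 fun c (hc : μ c = 0) ↦ ?_)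
    calc s.inr.hom (j c) = s.inl.hom (μ c) :=
          (DFunLike.congr_fun (congrArg CommRingCat.Hom.hom s.condition) c).symm
      _ = 0 := by rw [hc, map_zero]
  let d s := CommRingCat.ofHom (φ.liftOfSurjective hφ ⟨s.inr.hom, hle s⟩)
  have hd s : CommRingCat.ofHom φ ≫ d s = s.inr :=
    CommRingCat.hom_ext (φ.liftOfSurjective_comp hφ ⟨s.inr.hom, hle s⟩)
  exact ⟨⟨w'⟩, ⟨Limits.PushoutCocone.IsColimit.mk w' d
    (fun s ↦ by
      rw [← cancel_epi (CommRingCat.ofHom μ), s.condition, ← hd s, reassoc_of% w'])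
    hd (fun s m _ hm ↦ by rw [← cancel_epi (CommRingCat.ofHom φ), hm, hd])⟩⟩

end FlatOver

section QuotientKer

variable {R : Type*} {S : Type u} [CommRing R] [CommRing S]

/-- `S ⊗[R] X ≃ X ⧸ ker • X` for `R → S` surjective. -/
def tensorEquivQuotientKerSMul [Algebra R S] (hφ : Function.Surjective (algebraMap R S))
    (X : Type*) [AddCommGroup X] [Module R X] :
    S ⊗[R] X ≃ₗ[R] X ⧸ (RingHom.ker (algebraMap R S) • ⊤ : Submodule R X) :=
  (Ideal.quotientKerAlgEquivOfSurjective (f := Algebra.ofId R S) hφ).symm.toLinearEquiv.rTensor X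
    ≪≫ₗ TensorProduct.quotTensorEquivQuotSMul X _

/-- Extension of scalars along `φ` with section `ρ` is the quotient by `ker φ`, on which `S` acts
through `ρ`. -/
def extendScalarsIsoQuotient {φ : R →+* S} {ρ : S →+* R} (h : φ.comp ρ = .id S) {X : Type u}
    [AddCommGroup X] [Module R X] {W : Submodule R X} (hW : W = RingHom.ker φ • ⊤) :
    (ModuleCat.extendScalars φ).obj (.of R X) ≅
      (ModuleCat.restrictScalars ρ).obj (.of R (X ⧸ W)) := by
  subst hW
  let _ := φ.toAlgebra
  let _ : Module S (X ⧸ (RingHom.ker φ • ⊤ : Submodule R X)) := Module.compHom _ ρ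
  have hφρ (s : S) : φ (ρ s) = s := DFunLike.congr_fun h s
  have hsurj : Function.Surjective (algebraMap R S) := Function.RightInverse.surjective hφρ
  have hmem (r : R) (x : X) : (ρ (φ r) - r) • x ∈ (RingHom.ker φ • ⊤ : Submodule R X) :=
    Submodule.smul_mem_smul (by simp [RingHom.mem_ker, hφρ]) trivial
  have : IsScalarTower R S (X ⧸ (RingHom.ker φ • ⊤ : Submodule R X)) :=
    .of_algebraMap_smul fun r ↦ (Submodule.Quotient.mk_surjective _).forall.2 fun x ↦
      (Submodule.Quotient.eq _).2 (sub_smul (ρ (φ r)) r x ▸ hmem r x)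
  exact ((tensorEquivQuotientKerSMul hsurj X).extendScalarsOfSurjective hsurj).toModuleIso

end QuotientKer

section Middle

variable (K : Type) [Field K] (A : Type) [CommRing A] [Algebra K A]

/-- The map `A^{⊗4} → A^{⊗3}`, `a ⊗ b ⊗ c ⊗ d ↦ a ⊗ bc ⊗ d`, multiplying the two middle
factors. -/
def mulMiddle : (A ⊗[K] A) ⊗[K] (A ⊗[K] A) →ₐ[K] (A ⊗[K] A) ⊗[K] A :=
  Algebra.TensorProduct.productMap Algebra.TensorProduct.includeLeft
    (Algebra.TensorProduct.map Algebra.TensorProduct.includeRight (AlgHom.id K A))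

/-- The inclusion `A^{⊗2} → A^{⊗4}`, `s ⊗ t ↦ 1 ⊗ s ⊗ t ⊗ 1`, of the two middle factors. -/
def includeMiddle : A ⊗[K] A →ₐ[K] (A ⊗[K] A) ⊗[K] (A ⊗[K] A) :=
  Algebra.TensorProduct.map Algebra.TensorProduct.includeRight Algebra.TensorProduct.includeLeft

lemma mulMiddle_comp_rho : (mulMiddle K A).comp (rho K A) = AlgHom.id K _ := by
  ext a <;> simp [mulMiddle, rho, Algebra.TensorProduct.one_def]

lemma mu3_comp_mulMiddle : (mu3 K A).comp (mulMiddle K A) = mu4 K A := by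
  ext a <;> simp [mulMiddle, mu3, mu4, mu2]

lemma ker_mulMiddle : RingHom.ker (mulMiddle K A).toRingHom =
    Ideal.span (Set.range fun a : A ↦ ((1 ⊗ₜ a) ⊗ₜ 1 - 1 ⊗ₜ (a ⊗ₜ 1) :
      (A ⊗[K] A) ⊗[K] (A ⊗[K] A))) := by
  set J := Ideal.span (Set.range fun a : A ↦ ((1 ⊗ₜ a) ⊗ₜ 1 - 1 ⊗ₜ (a ⊗ₜ 1) :
      (A ⊗[K] A) ⊗[K] (A ⊗[K] A)))
  refine le_antisymm (fun x (hx : mulMiddle K A x = 0) ↦ ?_) (Ideal.span_le.2 ?_)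
  · have hmid (a : A) :
        Ideal.Quotient.mk J ((1 ⊗ₜ a) ⊗ₜ 1) = Ideal.Quotient.mk J (1 ⊗ₜ (a ⊗ₜ 1)) :=
      Ideal.Quotient.eq.2 (Ideal.subset_span ⟨a, rfl⟩)
    have hmk : Ideal.Quotient.mkₐ K J =
        ((Ideal.Quotient.mkₐ K J).comp (rho K A)).comp (mulMiddle K A) := by
      ext a <;> simp [mulMiddle, rho, ← hmid, ← Algebra.TensorProduct.one_def]
    rw [← Ideal.Quotient.eq_zero_iff_mem]
    simpa [hx] using DFunLike.congr_fun hmk x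
  · rintro _ ⟨a, rfl⟩
    simp [RingHom.mem_ker, mulMiddle, Algebra.TensorProduct.one_def]

lemma flat_includeMiddle : (includeMiddle K A).toRingHom.Flat := by
  have hl : (Algebra.TensorProduct.includeLeft : A →ₐ[K] A ⊗[K] A).Flat :=
    RingHom.flat_algebraMap_iff.2 inferInstance
  have hr : (Algebra.TensorProduct.includeRight : A →ₐ[K] A ⊗[K] A).Flat :=
    hl.comp (.of_bijective (Algebra.TensorProduct.comm K A A).bijective)
  exact RingHom.Flat.tensorProductMap hr hl

lemma mulMiddle_comp_includeMiddle : (mulMiddle K A).comp (includeMiddle K A) =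
    (Algebra.TensorProduct.includeLeft.comp Algebra.TensorProduct.includeRight).comp
      (mu2 K A) := by
  ext a <;> simp [mulMiddle, includeMiddle, mu2]

lemma isPushout_mulMiddle :
    IsPushout (CommRingCat.ofHom (mu2 K A).toRingHom)
      (CommRingCat.ofHom (includeMiddle K A).toRingHom)
      (CommRingCat.ofHom (Algebra.TensorProduct.includeLeft.comp
        Algebra.TensorProduct.includeRight : A →ₐ[K] (A ⊗[K] A) ⊗[K] A).toRingHom)
      (CommRingCat.ofHom (mulMiddle K A).toRingHom) := by
  have hmu2 : Function.Surjective (mu2 K A) := fun a ↦ ⟨a ⊗ₜ 1, by simp [mu2]⟩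
  have hmulMiddle : Function.Surjective (mulMiddle K A) := fun x ↦
    ⟨rho K A x, DFunLike.congr_fun (mulMiddle_comp_rho K A) x⟩
  refine isPushout_of_surjective
    (congrArg AlgHom.toRingHom (mulMiddle_comp_includeMiddle K A).symm) hmu2 hmulMiddle ?_
  rw [ker_mulMiddle, Ideal.span_le]
  rintro _ ⟨a, rfl⟩
  have ha : (a ⊗ₜ 1 - 1 ⊗ₜ a : A ⊗[K] A) ∈ RingHom.ker (mu2 K A).toRingHom := by
    simp [RingHom.mem_ker, mu2]
  simpa [includeMiddle, Algebra.TensorProduct.one_def] using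
    Ideal.mem_map_of_mem (includeMiddle K A).toRingHom ha

variable {K A} in
lemma relators_eq_ker_mulMiddle_smul_top {B : Type} [AddCommGroup B] [Module K B]
    [Module (A ⊗[K] A) B] [Module ((A ⊗[K] A) ⊗[K] (A ⊗[K] A)) (B ⊗[K] B)]
    (hsmul : ∀ (r s : A ⊗[K] A) (x y : B),
      ((r ⊗ₜ[K] s : (A ⊗[K] A) ⊗[K] (A ⊗[K] A)) • (x ⊗ₜ[K] y : B ⊗[K] B)) =
        (r • x) ⊗ₜ[K] (s • y)) :
    relators K A B = RingHom.ker (mulMiddle K A).toRingHom • ⊤ := by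
  have htop : Submodule.span ((A ⊗[K] A) ⊗[K] (A ⊗[K] A)) {z | ∃ x y : B, x ⊗ₜ[K] y = z} = ⊤ := by
    refine Submodule.eq_top_iff'.2 fun z ↦ ?_
    induction z with
    | zero => exact zero_mem _
    | add x y hx hy => exact add_mem hx hy
    | tmul x y => exact Submodule.subset_span ⟨x, y, rfl⟩
  rw [ker_mulMiddle, ← htop, Submodule.span_smul_span, relators]
  congr 1
  ext z
  simp [Set.mem_smul, sub_smul, hsmul, eq_comm]

end Middle

theorem statement2_general (K : Type) [Field K] (A : Type) [CommRing A] [Algebra K A]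
    (B : Type) [AddCommGroup B] [Module K B] [Module (A ⊗[K] A) B]
    [IsScalarTower K (A ⊗[K] A) B]
    [Module ((A ⊗[K] A) ⊗[K] (A ⊗[K] A)) (B ⊗[K] B)]
    (hsmul : ∀ (r s : A ⊗[K] A) (x y : B),
      ((r ⊗ₜ[K] s : (A ⊗[K] A) ⊗[K] (A ⊗[K] A)) • (x ⊗ₜ[K] y : B ⊗[K] B)) =
        (r • x) ⊗ₜ[K] (s • y))
    (hflat₁ : Module.Flat A
      ((ModuleCat.restrictScalars
          (Algebra.TensorProduct.includeLeft : A →ₐ[K] A ⊗[K] A).toRingHom).obj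
        (ModuleCat.of (A ⊗[K] A) B)))
    (hflat₂ : Module.Flat A
      ((ModuleCat.restrictScalars
          (Algebra.TensorProduct.includeRight : A →ₐ[K] A ⊗[K] A).toRingHom).obj
        (ModuleCat.of (A ⊗[K] A) B)))
    (N : ModuleCat.{0} ((A ⊗[K] A) ⊗[K] A)) (n : ℕ) :
    Nonempty
      ((ModuleCat.restrictScalars (algebraMap K ((A ⊗[K] A) ⊗[K] A))).obj
          (((Ext ((A ⊗[K] A) ⊗[K] A) (ModuleCat ((A ⊗[K] A) ⊗[K] A)) n).obj
              (Opposite.op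
                ((ModuleCat.restrictScalars (rho K A).toRingHom).obj
                  (ModuleCat.of ((A ⊗[K] A) ⊗[K] (A ⊗[K] A))
                    ((B ⊗[K] B) ⧸ relators K A B))))).obj
            N) ≅
        (ModuleCat.restrictScalars (algebraMap K ((A ⊗[K] A) ⊗[K] (A ⊗[K] A)))).obj
          (((Ext ((A ⊗[K] A) ⊗[K] (A ⊗[K] A))
                (ModuleCat ((A ⊗[K] A) ⊗[K] (A ⊗[K] A))) n).obj
              (Opposite.op (ModuleCat.of ((A ⊗[K] A) ⊗[K] (A ⊗[K] A)) (B ⊗[K] B)))).obj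
            ((ModuleCat.restrictScalars (mulMiddle K A).toRingHom).obj N))) := by
  let κ := algebraMap K ((A ⊗[K] A) ⊗[K] (A ⊗[K] A))
  let φ := (mulMiddle K A).toRingHom
  have hadapted := isSyzygyAdapted_extendScalars (isPushout_mulMiddle K A) (flat_includeMiddle K A)
  have hB : flatOver (includeMiddle K A).toRingHom (ModuleCat.of _ (B ⊗[K] B)) :=
    flatOver_tensorProduct hsmul hflat₂ hflat₁
  let eB := extendScalarsIsoQuotient (congrArg AlgHom.toRingHom (mulMiddle_comp_rho K A))
    (relators_eq_ker_mulMiddle_smul_top hsmul)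
  exact ⟨(ModuleCat.restrictScalars _).mapIso (((Ext _ (ModuleCat _) n).mapIso eB.op).app N) ≪≫
    (ModuleCat.restrictScalarsComp' κ φ _ (mulMiddle K A).comp_algebraMap.symm).app _ ≪≫
    (ModuleCat.restrictScalars κ).mapIso (hadapted.extExtendScalarsIso hB N n)⟩

theorem statement2 (K : Type) [Field K] (A : Type) [CommRing A] [Algebra K A]
    (B : Type) [AddCommGroup B] [Module K B] [Module (A ⊗[K] A) B]
    [IsScalarTower K (A ⊗[K] A) B]
    [Module ((A ⊗[K] A) ⊗[K] (A ⊗[K] A)) (B ⊗[K] B)]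
    (hsmul : ∀ (r s : A ⊗[K] A) (x y : B),
      ((r ⊗ₜ[K] s : (A ⊗[K] A) ⊗[K] (A ⊗[K] A)) • (x ⊗ₜ[K] y : B ⊗[K] B)) =
        (r • x) ⊗ₜ[K] (s • y))
    -- `B` is flat as an `A`-module for the action `·₁ = (· ⊗ 1) •` …
    (hflat₁ : Module.Flat A
      ((ModuleCat.restrictScalars
          (Algebra.TensorProduct.includeLeft : A →ₐ[K] A ⊗[K] A).toRingHom).obj
        (ModuleCat.of (A ⊗[K] A) B)))
    -- … and for the action `·₂ = (1 ⊗ ·) •`: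
    (hflat₂ : Module.Flat A
      ((ModuleCat.restrictScalars
          (Algebra.TensorProduct.includeRight : A →ₐ[K] A ⊗[K] A).toRingHom).obj
        (ModuleCat.of (A ⊗[K] A) B)))
    (M : Type) [AddCommGroup M] [Module A M] (n : ℕ) :
    Nonempty
      ((ModuleCat.restrictScalars (algebraMap K ((A ⊗[K] A) ⊗[K] A))).obj
          (((Ext ((A ⊗[K] A) ⊗[K] A) (ModuleCat ((A ⊗[K] A) ⊗[K] A)) n).obj
              (Opposite.op
                ((ModuleCat.restrictScalars (rho K A).toRingHom).obj
                  (ModuleCat.of ((A ⊗[K] A) ⊗[K] (A ⊗[K] A))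
                    ((B ⊗[K] B) ⧸ relators K A B))))).obj
            ((ModuleCat.restrictScalars (mu3 K A).toRingHom).obj (ModuleCat.of A M))) ≅
        (ModuleCat.restrictScalars (algebraMap K ((A ⊗[K] A) ⊗[K] (A ⊗[K] A)))).obj
          (((Ext ((A ⊗[K] A) ⊗[K] (A ⊗[K] A))
                (ModuleCat ((A ⊗[K] A) ⊗[K] (A ⊗[K] A))) n).obj
              (Opposite.op (ModuleCat.of ((A ⊗[K] A) ⊗[K] (A ⊗[K] A)) (B ⊗[K] B)))).obj
            ((ModuleCat.restrictScalars (mu4 K A).toRingHom).obj (ModuleCat.of A M)))) := by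
  let eM := (ModuleCat.restrictScalarsComp' _ _ _
    (congrArg AlgHom.toRingHom (mu3_comp_mulMiddle K A).symm)).app (ModuleCat.of A M)
  exact (statement2_general K A B hsmul hflat₁ hflat₂ _ n).map fun e ↦
    e ≪≫ (ModuleCat.restrictScalars _).mapIso (((Ext _ (ModuleCat _) n).obj _).mapIso eM.symm)
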